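/- Take n = 1 and assume k ≤ 2j − 2, and let R ⊆ A be the ℂ-span of the monomials z^l·u with k − j + 1 ≤ l ≤ j − 1, so dim_ℂ R = 2j − k − 1. Then the relation E_p ≅ E_{p′} is an equivalence relation on R ∖ {0}, and the map sending p to the line ℂ·p induces a well-defined bijection from the set of equivalence classes of R ∖ {0} under this relation onto the projectivization ℙ(R) of R, which is a projective space of dimension 2j − k − 2. (This is the identification of the coarse moduli space of nontrivial extension bundles of splitting type j on Z_k^{(1)} with ℙ^{2j−k−2}.) -/

import Mathlib

set_option synthInstance.maxHeartbeats 1000000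
set_option maxHeartbeats 1000000

noncomputable section

/-- The ring of Laurent polynomials `ℂ[z,z⁻¹]`. -/
abbrev Lz : Type := LaurentPolynomial ℂ

/-- The ring `P = ℂ[z,z⁻¹][[u]]` of formal power series in `u` with Laurent
polynomial coefficients. -/
abbrev Pz : Type := PowerSeries Lz

/-- The monomial `z^l u^i` as an element of `P`. -/
def mon (l : ℤ) (i : ℕ) : Pz := PowerSeries.monomial i (LaurentPolynomial.T l)

/-- The ideal `(u^{n+1})` of `P`. -/
def In (n : ℕ) : Ideal Pz := Ideal.span {(PowerSeries.X : Pz) ^ (n + 1)}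

/-- The ring `A = ℂ[z,z⁻¹][u]/(u^{n+1})`, the coordinate ring of the overlap of the two
standard charts of the `n`-th infinitesimal neighborhood `Z_k^{(n)}`. -/
abbrev Aq (n : ℕ) : Type := Pz ⧸ In n

/-- The quotient map `P → A`. -/
def toA (n : ℕ) : Pz →+* Aq n := Ideal.Quotient.mk (In n)

/-- The monomial `z^l u^i` as an element of `A`. -/
def monA (n : ℕ) (l : ℤ) (i : ℕ) : Aq n := toA n (mon l i)

/-- `O_U ⊆ A`: the `ℂ`-span of the monomials `z^l u^i` with `l ≥ 0`, `0 ≤ i ≤ n`. -/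
def OU (n : ℕ) : Submodule ℂ (Aq n) :=
  Submodule.span ℂ {x | ∃ l : ℤ, ∃ i : ℕ, 0 ≤ l ∧ i ≤ n ∧ x = monA n l i}

/-- `O_V ⊆ A`: the `ℂ`-span of the monomials `z^l u^i` with `l ≤ k·i`, `0 ≤ i ≤ n`. -/
def OV (k n : ℕ) : Submodule ℂ (Aq n) :=
  Submodule.span ℂ {x | ∃ l : ℤ, ∃ i : ℕ, l ≤ k * i ∧ i ≤ n ∧ x = monA n l i}

/-- The submodule `a·S` obtained from a submodule `S` by multiplying by a fixed element `a`. -/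
def msmul {n : ℕ} (a : Aq n) (S : Submodule ℂ (Aq n)) : Submodule ℂ (Aq n) :=
  Submodule.map (LinearMap.mulLeft ℂ a) S

/-- `R ⊆ A`: the `ℂ`-span of the monomials `z^l u^i` with `1 ≤ i ≤ n` and
`k·i − j + 1 ≤ l ≤ j − 1` (the space of normal forms of extension classes). -/
def Rmod (k n : ℕ) (j : ℤ) : Submodule ℂ (Aq n) :=
  Submodule.span ℂ
    {x | ∃ l : ℤ, ∃ i : ℕ, 1 ≤ i ∧ i ≤ n ∧ (k : ℤ) * i - j + 1 ≤ l ∧ l ≤ j - 1 ∧ x = monA n l i}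

/-- The transition matrix `M_p = ((z^j, p),(0, z^{−j}))` of the bundle `E_p`. -/
def Mmat (n : ℕ) (j : ℤ) (p : Aq n) : Matrix (Fin 2) (Fin 2) (Aq n) :=
  !![monA n j 0, p; 0, monA n (-j) 0]

/-- `E_p ≅ E_{p′}`: there are matrices `A₁` with entries in `O_U` and `B₁` with entries
in `O_V`, with `det A₁` a unit of `O_U` and `det B₁` a unit of `O_V`, with
`B₁ · M_p = M_{p′} · A₁`. -/
def BundleIso (k n : ℕ) (j : ℤ) (p p' : Aq n) : Prop :=
  ∃ A₁ B₁ : Matrix (Fin 2) (Fin 2) (Aq n),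
    (∀ a b : Fin 2, A₁ a b ∈ OU n) ∧ (∀ a b : Fin 2, B₁ a b ∈ OV k n) ∧
    (∃ w ∈ OU n, A₁.det * w = 1) ∧ (∃ w ∈ OV k n, B₁.det * w = 1) ∧
    B₁ * Mmat n j p = Mmat n j p' * A₁

/-- The isomorphism relation `E_p ≅ E_{p′}` restricted to the nonzero elements of `R`. -/
def relIso (k : ℕ) (j : ℤ) (p q : {x : Aq 1 // x ∈ Rmod k 1 j ∧ x ≠ 0}) : Prop :=
  BundleIso k 1 j p.1 q.1

/-- The coefficient of `u^i` of an element of `A` (only used for `i ≤ 1`). -/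
def cf (i : ℕ) (x : Aq 1) : Lz := PowerSeries.coeff i (Quotient.out x)

lemma toA_surj (x : Aq 1) : ∃ f, toA 1 f = x := Ideal.Quotient.mk_surjective x

lemma toA_eq_iff (f g : Pz) :
    toA 1 f = toA 1 g ↔ ∀ i < 2, PowerSeries.coeff i f = PowerSeries.coeff i g := by
  unfold toA
  rw [Ideal.Quotient.eq, In, Ideal.mem_span_singleton, PowerSeries.X_pow_dvd_iff]
  simp [sub_eq_zero]

lemma cf_toA (i : ℕ) (hi : i < 2) (f : Pz) : cf i (toA 1 f) = PowerSeries.coeff i f := by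
  have h : toA 1 (Quotient.out (toA 1 f)) = toA 1 f := Quotient.out_eq (toA 1 f)
  exact (toA_eq_iff _ _).1 h i hi

lemma cf_ext {x y : Aq 1} (h0 : cf 0 x = cf 0 y) (h1 : cf 1 x = cf 1 y) : x = y := by
  obtain ⟨f, rfl⟩ := toA_surj x
  obtain ⟨g, rfl⟩ := toA_surj y
  simp only [cf_toA 0 (by norm_num), cf_toA 1 (by norm_num)] at h0 h1
  rw [toA_eq_iff]
  intro i hi
  interval_cases i
  · exact h0
  · exact h1

lemma cf_add (i : ℕ) (hi : i < 2) (x y : Aq 1) : cf i (x + y) = cf i x + cf i y := by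
  obtain ⟨f, rfl⟩ := toA_surj x
  obtain ⟨g, rfl⟩ := toA_surj y
  rw [← map_add, cf_toA i hi, cf_toA i hi, cf_toA i hi, map_add]

lemma cf_sub (i : ℕ) (hi : i < 2) (x y : Aq 1) : cf i (x - y) = cf i x - cf i y := by
  obtain ⟨f, rfl⟩ := toA_surj x
  obtain ⟨g, rfl⟩ := toA_surj y
  rw [← map_sub, cf_toA i hi, cf_toA i hi, cf_toA i hi, map_sub]

lemma cf_zero (i : ℕ) (hi : i < 2) : cf i 0 = 0 := by
  rw [← map_zero (toA 1), cf_toA i hi, map_zero]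

lemma smul_toA (a : ℂ) (f : Pz) : a • toA 1 f = toA 1 (a • f) := rfl

lemma cf_smul (i : ℕ) (hi : i < 2) (a : ℂ) (x : Aq 1) : cf i (a • x) = a • cf i x := by
  obtain ⟨f, rfl⟩ := toA_surj x
  rw [smul_toA, cf_toA i hi, cf_toA i hi]
  rfl

lemma cf0_mul (x y : Aq 1) : cf 0 (x * y) = cf 0 x * cf 0 y := by
  obtain ⟨f, rfl⟩ := toA_surj x
  obtain ⟨g, rfl⟩ := toA_surj y
  rw [← map_mul, cf_toA 0 (by norm_num), cf_toA 0 (by norm_num), cf_toA 0 (by norm_num),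
    PowerSeries.coeff_mul]
  simp

lemma cf1_mul (x y : Aq 1) : cf 1 (x * y) = cf 0 x * cf 1 y + cf 1 x * cf 0 y := by
  obtain ⟨f, rfl⟩ := toA_surj x
  obtain ⟨g, rfl⟩ := toA_surj y
  rw [← map_mul, cf_toA 1 (by norm_num), cf_toA 0 (by norm_num), cf_toA 0 (by norm_num),
    cf_toA 1 (by norm_num), cf_toA 1 (by norm_num), PowerSeries.coeff_mul]
  simp [Finset.Nat.antidiagonal_succ]

lemma cf_mon (i : ℕ) (hi : i < 2) (l : ℤ) (m : ℕ) :
    cf i (monA 1 l m) = if i = m then LaurentPolynomial.T l else 0 := by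
  rw [monA, cf_toA i hi, mon, PowerSeries.coeff_monomial]

lemma cf0_one : cf 0 1 = 1 := by
  rw [← map_one (toA 1), cf_toA 0 (by norm_num)]
  simp

lemma one_eq_monA : (1 : Aq 1) = monA 1 0 0 := by
  unfold monA mon
  rw [LaurentPolynomial.T_zero, PowerSeries.monomial_zero_eq_C_apply, map_one, map_one]

/-- A general support statement for spans of monomials. -/
lemma supp_span (S : Set (Aq 1)) (i : ℕ) (hi : i < 2) (m : ℤ)
    (hS : ∀ x ∈ S, (cf i x).coeff m = 0) (x : Aq 1) (hx : x ∈ Submodule.span ℂ S) :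
    (cf i x).coeff m = 0 := by
  induction hx using Submodule.span_induction with
  | mem x hx => exact hS x hx
  | zero => rw [cf_zero i hi]; rfl
  | add x y _ _ hx hy => rw [cf_add i hi, AddMonoidAlgebra.coeff_add, Finsupp.add_apply, hx, hy, add_zero]
  | smul a x _ hx => rw [cf_smul i hi, AddMonoidAlgebra.coeff_smul, Finsupp.smul_apply, hx, smul_zero]

lemma supp_mon (i : ℕ) (hi : i < 2) (l : ℤ) (m : ℕ) (t : ℤ) (h : i = m → l ≠ t) :
    (cf i (monA 1 l m)).coeff t = 0 := by
  rw [cf_mon i hi]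
  split_ifs with h1
  · rw [LaurentPolynomial.T_apply, if_neg (h h1)]
  · rfl

lemma supp_OU (i : ℕ) (hi : i < 2) (t : ℤ) (ht : t < 0) (x : Aq 1) (hx : x ∈ OU 1) :
    (cf i x).coeff t = 0 := by
  refine supp_span _ i hi t ?_ x hx
  rintro _ ⟨l, m, hl, hm, rfl⟩
  exact supp_mon i hi l m t (by omega)

lemma supp_OV (k i : ℕ) (hi : i < 2) (t : ℤ) (ht : (k : ℤ) * i < t) (x : Aq 1) (hx : x ∈ OV k 1) :
    (cf i x).coeff t = 0 := by
  refine supp_span _ i hi t ?_ x hx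
  rintro _ ⟨l, m, hl, hm, rfl⟩
  refine supp_mon i hi l m t ?_
  rintro rfl
  omega

lemma cf0_R (k : ℕ) (j : ℤ) (x : Aq 1) (hx : x ∈ Rmod k 1 j) : cf 0 x = 0 := by
  apply LaurentPolynomial.ext
  intro t
  refine supp_span _ 0 (by norm_num) t ?_ x hx
  rintro _ ⟨l, m, h1, h2, h3, h4, rfl⟩
  exact supp_mon 0 (by norm_num) l m t (by omega)

lemma cf1_R (k : ℕ) (j : ℤ) (x : Aq 1) (hx : x ∈ Rmod k 1 j) (t : ℤ)
    (ht : t < k - j + 1 ∨ j - 1 < t) : (cf 1 x).coeff t = 0 := by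
  refine supp_span _ 1 (by norm_num) t ?_ x hx
  rintro _ ⟨l, m, h1, h2, h3, h4, rfl⟩
  refine supp_mon 1 (by norm_num) l m t ?_
  rintro rfl
  push_cast at h3
  omega

lemma coeff_T_mul (l t : ℤ) (f : Lz) :
    (LaurentPolynomial.T l * f).coeff t = f.coeff (t - l) := by
  rw [LaurentPolynomial.T, AddMonoidAlgebra.coeff_single_mul_apply, one_mul]
  congr 1
  ring

lemma coeff_mul_T (l t : ℤ) (f : Lz) :
    (f * LaurentPolynomial.T l).coeff t = f.coeff (t - l) := by
  rw [mul_comm, coeff_T_mul]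

lemma coeff_C_mul' (a : ℂ) (t : ℤ) (f : Lz) :
    (LaurentPolynomial.C a * f).coeff t = a * f.coeff t := by
  rw [← LaurentPolynomial.smul_eq_C_mul]; rfl

lemma eq_C_of (f : Lz) (h : ∀ t, t ≠ 0 → f.coeff t = 0) : f = LaurentPolynomial.C (f.coeff 0) := by
  apply LaurentPolynomial.ext
  intro t
  rw [LaurentPolynomial.C_apply]
  split_ifs with ht
  · rw [ht]
  · exact h t ht

lemma iso_imp (k : ℕ) (j : ℤ) (hj : 1 ≤ j) (p q : Aq 1) (hp : p ∈ Rmod k 1 j)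
    (hq : q ∈ Rmod k 1 j) (h : BundleIso k 1 j p q) : ∃ c : ℂ, c ≠ 0 ∧ q = c • p := by
  obtain ⟨A, B, hA, hB, ⟨w, hw, hdet⟩, -, hM⟩ := h
  have e00 : B 0 0 * monA 1 j 0 = monA 1 j 0 * A 0 0 + q * A 1 0 := by
    have := congrFun (congrFun hM 0) 0
    simpa [Mmat, Matrix.mul_apply, Fin.sum_univ_two] using this
  have e01 : B 0 0 * p + B 0 1 * monA 1 (-j) 0 = monA 1 j 0 * A 0 1 + q * A 1 1 := by
    have := congrFun (congrFun hM 0) 1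
    simpa [Mmat, Matrix.mul_apply, Fin.sum_univ_two] using this
  have e11 : B 1 0 * p + B 1 1 * monA 1 (-j) 0 = monA 1 (-j) 0 * A 1 1 := by
    have := congrFun (congrFun hM 1) 1
    simpa [Mmat, Matrix.mul_apply, Fin.sum_univ_two] using this
  have h01 : (0 : ℕ) < 2 := by norm_num
  have h11 : (1 : ℕ) < 2 := by norm_num
  have p0 := cf0_R k j p hp
  have q0 := cf0_R k j q hq
  have f00 := congrArg (cf 0) e00
  have f01 := congrArg (cf 0) e01
  have f11 := congrArg (cf 0) e11
  have g01 := congrArg (cf 1) e01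
  simp only [cf_add 0 h01, cf_add 1 h11, cf0_mul, cf1_mul, cf_mon 0 h01, cf_mon 1 h11, p0, q0,
    if_true, one_ne_zero, if_false, mul_zero, zero_mul, add_zero, zero_add] at f00 f01 f11 g01
  have hBA0 : ∀ t, (cf 0 (B 0 0)).coeff t = (cf 0 (A 0 0)).coeff t := by
    intro t
    have := congrArg (fun f : Lz => f.coeff (t + j)) f00
    simpa only [coeff_mul_T, coeff_T_mul, add_sub_cancel_right] using this
  have hBA1 : ∀ t, (cf 0 (B 1 1)).coeff t = (cf 0 (A 1 1)).coeff t := by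
    intro t
    have := congrArg (fun f : Lz => f.coeff (t + -j)) f11
    simpa only [coeff_mul_T, coeff_T_mul, add_sub_cancel_right] using this
  have hC : ∀ i, (∀ t, (cf 0 (B i i)).coeff t = (cf 0 (A i i)).coeff t) →
      cf 0 (A i i) = LaurentPolynomial.C ((cf 0 (A i i)).coeff 0) := by
    intro i hi
    apply eq_C_of
    intro t ht
    rcases lt_or_gt_of_ne ht with h | h
    · exact supp_OU 0 h01 t h _ (hA i i)
    · rw [← hi]
      exact supp_OV k 0 h01 t (by simpa using h) _ (hB i i)
  have hA0 := hC 0 hBA0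
  have hA1 := hC 1 hBA1
  have hB0 : cf 0 (B 0 0) = cf 0 (A 0 0) := LaurentPolynomial.ext hBA0
  have hA01 : cf 0 (A 0 1) = 0 := by
    apply LaurentPolynomial.ext
    intro t
    by_cases ht : t < 0
    · exact supp_OU 0 h01 t ht _ (hA 0 1)
    · have := congrArg (fun f : Lz => f.coeff (t + j)) f01
      simp only [coeff_mul_T, coeff_T_mul, add_sub_cancel_right] at this
      rw [← this]
      exact supp_OV k 0 h01 _ (by push_cast; omega) _ (hB 0 1)
  generalize (cf 0 (A 0 0)).coeff 0 = α at hA0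
  generalize (cf 0 (A 1 1)).coeff 0 = δ at hA1
  have hd := congrArg (cf 0) hdet
  rw [Matrix.det_fin_two, cf0_mul, cf_sub 0 h01, cf0_mul, cf0_mul, hA01, zero_mul, sub_zero,
    hA0, hA1, cf0_one] at hd
  have hα : α ≠ 0 := by
    rintro rfl
    simp at hd
  have hδ : δ ≠ 0 := by
    rintro rfl
    simp at hd
  have key : ∀ t, α * (cf 1 p).coeff t = δ * (cf 1 q).coeff t := by
    intro t
    by_cases ht : t < k - j + 1 ∨ j - 1 < t
    · rw [cf1_R k j p hp t ht, cf1_R k j q hq t ht, mul_zero, mul_zero]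
    · have := congrArg (fun f : Lz => f.coeff t) g01
      simp only [hB0, hA0, hA1, mul_comm (cf 1 q), AddMonoidAlgebra.coeff_add, Finsupp.add_apply,
        coeff_mul_T, coeff_T_mul, coeff_C_mul'] at this
      rw [supp_OV k 1 h11 _ (by push_cast; omega) _ (hB 0 1),
        supp_OU 1 h11 _ (by omega) _ (hA 0 1)] at this
      simpa using this
  refine ⟨α / δ, div_ne_zero hα hδ, cf_ext ?_ ?_⟩
  · rw [cf_smul 0 h01, p0, q0, smul_zero]
  · rw [cf_smul 1 h11]
    apply LaurentPolynomial.ext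
    intro t
    rw [AddMonoidAlgebra.coeff_smul, Finsupp.smul_apply, smul_eq_mul]
    have := key t
    field_simp
    linear_combination -this

lemma one_mem_OU : (1 : Aq 1) ∈ OU 1 :=
  Submodule.subset_span ⟨0, 0, le_refl _, by norm_num, one_eq_monA⟩

lemma one_mem_OV (k : ℕ) : (1 : Aq 1) ∈ OV k 1 :=
  Submodule.subset_span ⟨0, 0, by simp, by norm_num, one_eq_monA⟩

lemma imp_iso (k : ℕ) (j : ℤ) (p : Aq 1) (c : ℂ) (hc : c ≠ 0) :
    BundleIso k 1 j p (c • p) := by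
  have key : ∀ S : Submodule ℂ (Aq 1), (1 : Aq 1) ∈ S →
      (∀ a b : Fin 2, (!![c • (1 : Aq 1), 0; 0, 1] : Matrix (Fin 2) (Fin 2) (Aq 1)) a b ∈ S) ∧
      (∃ w ∈ S, (!![c • (1 : Aq 1), 0; 0, 1] : Matrix (Fin 2) (Fin 2) (Aq 1)).det * w = 1) := by
    intro S hS
    constructor
    · intro a b
      fin_cases a <;> fin_cases b
      · exact S.smul_mem c hS
      · exact S.zero_mem
      · exact S.zero_mem
      · exact hS
    · refine ⟨c⁻¹ • 1, S.smul_mem _ hS, ?_⟩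
      rw [Matrix.det_fin_two_of]
      simp only [mul_one, mul_zero, sub_zero, smul_mul_assoc, one_mul, smul_smul,
        mul_inv_cancel₀ hc, one_smul]
  refine ⟨_, _, (key _ one_mem_OU).1, (key _ (one_mem_OV k)).1, (key _ one_mem_OU).2,
    (key _ (one_mem_OV k)).2, ?_⟩
  rw [Mmat, Mmat, Matrix.mul_fin_two, Matrix.mul_fin_two]
  simp

lemma rel_iff (k : ℕ) (j : ℤ) (hj : 1 ≤ j) (p q : {x : Aq 1 // x ∈ Rmod k 1 j ∧ x ≠ 0}) :
    relIso k j p q ↔ ∃ c : ℂ, c ≠ 0 ∧ q.1 = c • p.1 := by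
  constructor
  · exact iso_imp k j hj _ _ p.2.1 q.2.1
  · rintro ⟨c, hc, h⟩
    unfold relIso
    rw [h]
    exact imp_iso k j _ c hc

/-- The `u`-coefficient as a linear map. -/
def cf1Lin : Aq 1 →ₗ[ℂ] Lz where
  toFun := cf 1
  map_add' := cf_add 1 (by norm_num)
  map_smul' := cf_smul 1 (by norm_num)

lemma finrank_R (k : ℕ) (j : ℤ) (hkj : (k : ℤ) ≤ 2 * j - 2) :
    (Module.finrank ℂ (Rmod k 1 j) : ℤ) = 2 * j - k - 1 := by
  let b : Finset.Icc ((k : ℤ) - j + 1) (j - 1) → Aq 1 := fun l => monA 1 l.1 1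
  have hR : Rmod k 1 j = Submodule.span ℂ (Set.range b) := by
    unfold Rmod
    congr 1
    ext x
    constructor
    · rintro ⟨l, i, h1, h2, h3, h4, rfl⟩
      obtain rfl : i = 1 := by omega
      exact ⟨⟨l, by rw [Finset.mem_Icc]; push_cast at h3; omega⟩, rfl⟩
    · rintro ⟨⟨l, hl⟩, rfl⟩
      rw [Finset.mem_Icc] at hl
      exact ⟨l, 1, le_refl _, le_refl _, by push_cast; omega, by omega, rfl⟩
  have hb : LinearIndependent ℂ b := by
    rw [Fintype.linearIndependent_iff]
    intro g hg i
    have := congrArg (fun x => (cf1Lin x).coeff i.1) hg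
    simp only [map_sum, map_smul, map_zero, AddMonoidAlgebra.coeff_sum, Finsupp.finsetSum_apply,
      AddMonoidAlgebra.coeff_smul, Finsupp.smul_apply] at this
    rw [Finset.sum_eq_single i] at this
    · simpa [cf1Lin, b, cf_mon] using this
    · intro l _ hl
      have : l.1 ≠ i.1 := fun h => hl (Subtype.ext h)
      simp [cf1Lin, b, cf_mon, this]
    · simp
  rw [hR, finrank_span_eq_card hb, Fintype.card_coe, Int.card_Icc]
  omega

/-- for `n = 1` and `k ≤ 2j − 2` (so `dim R = 2j − k − 1`), the relation
`E_p ≅ E_{p′}` is an equivalence relation on `R ∖ {0}` and `p ↦ ℂ·p` induces a well-defined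
bijection from its set of equivalence classes onto the projectivization `ℙ(R)`,
a projective space of dimension `2j − k − 2`. -/
theorem statement11 (k : ℕ) (hk : 1 ≤ k) (j : ℤ) (hj : 1 ≤ j)
    (hkj : (k : ℤ) ≤ 2 * j - 2) :
    (Module.finrank ℂ (Rmod k 1 j) : ℤ) = 2 * j - k - 1 ∧
    Equivalence (relIso k j) ∧
    ∃ F : Quot (relIso k j) → Projectivization ℂ (Rmod k 1 j),
      (∀ p : {x : Aq 1 // x ∈ Rmod k 1 j ∧ x ≠ 0},
        F (Quot.mk (relIso k j) p) =
          Projectivization.mk ℂ (⟨p.1, p.2.1⟩ : Rmod k 1 j)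
            (fun h => p.2.2 (congrArg Subtype.val h))) ∧
      Function.Bijective F := by
  refine ⟨finrank_R k j hkj, ⟨?_, ?_, ?_⟩, ?_⟩
  · intro p
    exact (rel_iff k j hj p p).2 ⟨1, one_ne_zero, (one_smul _ _).symm⟩
  · intro p q h
    obtain ⟨c, hc, h⟩ := (rel_iff k j hj p q).1 h
    exact (rel_iff k j hj q p).2 ⟨c⁻¹, inv_ne_zero hc, by
      rw [h, smul_smul, inv_mul_cancel₀ hc, one_smul]⟩
  · intro p q r h h'
    obtain ⟨c, hc, h⟩ := (rel_iff k j hj p q).1 h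
    obtain ⟨d, hd, h'⟩ := (rel_iff k j hj q r).1 h'
    exact (rel_iff k j hj p r).2 ⟨d * c, mul_ne_zero hd hc, by rw [h', h, smul_smul]⟩
  · have hmk : ∀ p q : {x : Aq 1 // x ∈ Rmod k 1 j ∧ x ≠ 0},
        relIso k j p q ↔
          Projectivization.mk ℂ (⟨p.1, p.2.1⟩ : Rmod k 1 j)
            (fun h => p.2.2 (congrArg Subtype.val h)) =
          Projectivization.mk ℂ (⟨q.1, q.2.1⟩ : Rmod k 1 j)
            (fun h => q.2.2 (congrArg Subtype.val h)) := by
      intro p q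
      rw [rel_iff k j hj, eq_comm, Projectivization.mk_eq_mk_iff']
      constructor
      · rintro ⟨c, hc, h⟩
        exact ⟨c, Subtype.ext h.symm⟩
      · rintro ⟨c, h⟩
        have h' : c • p.1 = q.1 := congrArg Subtype.val h
        refine ⟨c, ?_, h'.symm⟩
        rintro rfl
        rw [zero_smul] at h'
        exact q.2.2 h'.symm
    refine ⟨Quot.lift (fun p => Projectivization.mk ℂ (⟨p.1, p.2.1⟩ : Rmod k 1 j)
            (fun h => p.2.2 (congrArg Subtype.val h))) (fun p q h => (hmk p q).1 h),
      fun p => rfl, ?_, ?_⟩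
    · rintro ⟨p⟩ ⟨q⟩ h
      exact Quot.sound ((hmk p q).2 h)
    · intro y
      induction y using Projectivization.ind with
      | h v hv =>
        exact ⟨Quot.mk _ ⟨v.1, v.2, fun h => hv (Subtype.ext h)⟩, rfl⟩
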